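/- Suppose the RIFS $\mathbb{I}$ consists of similarity maps on $\mathbb{R}^n$ satisfying the uniform open set condition, and let $s_{\min} = \min_i s_i$, where $s_i$ solves $\sum_{j \in \mathcal{I}_i} \mathrm{Lip}(S_{i,j})^{s_i} = 1$. Then $\inf_{\omega \in \Omega} \mathcal{H}^{s_{\min}}(F_\omega) > 0$; in particular $\dim_H F_\omega \geq s_{\min}$ for all $\omega$. -/

import Mathlib

open Metric MeasureTheory Filter Set
open scoped ENNReal NNReal

/-- The level-`k` approximation of the random attractor: the union over all length-`k`
words `(i₁,…,i_k)` with `i_l ∈ 𝓘_{ω_l}` of `S_{ω₁,i₁} ∘ ⋯ ∘ S_{ω_k,i_k}(K₀)`. -/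
def levelSets {X : Type*} {N : ℕ} (m : Fin N → ℕ) (S : ∀ i, Fin (m i) → X → X) (K₀ : Set X) :
    (ℕ → Fin N) → ℕ → Set X
  | _, 0 => K₀
  | ω, k+1 => ⋃ j : Fin (m (ω 0)), S (ω 0) j '' levelSets m S K₀ (fun n => ω (n+1)) k

/-- The random attractor `F_ω = ⋂_k ⋃_{i₁,…,i_k} S_{ω₁,i₁} ∘ ⋯ ∘ S_{ω_k,i_k}(K₀)`. -/
def attractorOf {X : Type*} {N : ℕ} (m : Fin N → ℕ) (S : ∀ i, Fin (m i) → X → X)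
    (K₀ : Set X) (ω : ℕ → Fin N) : Set X :=
  ⋂ k, levelSets m S K₀ ω k

/-- `φ` is a bi-Lipschitz contraction. -/
def IsBiLipContraction {K : Type*} [MetricSpace K] (φ : K → K) : Prop :=
  ∃ c C : ℝ, 0 < c ∧ C < 1 ∧
    ∀ x y, c * dist x y ≤ dist (φ x) (φ y) ∧ dist (φ x) (φ y) ≤ C * dist x y


section HausdorffLowerBound

/-- The mass distribution principle, with the upper bound on the mass stated for small balls. -/
theorem le_hausdorffMeasure_of_measure_ball_le {X : Type*} [MetricSpace X] [MeasurableSpace X]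
    [BorelSpace X] (ν : Measure X) (C : ℝ≥0∞) (d : ℝ)
    (hball : ∀ x : X, ∀ r : ℝ, 0 < r → r ≤ 1 → ν (ball x r) ≤ C * ENNReal.ofReal r ^ d) :
    C⁻¹ • ν ≤ μH[d] := by
  refine Measure.le_hausdorffMeasure d _ (ENNReal.ofReal (1 / 2)) (by simp) fun A hA => ?_
  rcases A.eq_empty_or_nonempty with rfl | ⟨x, hx⟩
  · simp
  have hfin : ediam A ≠ ⊤ := ne_top_of_le_ne_top ENNReal.ofReal_ne_top hA
  set δ := (ediam A).toReal with hδ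
  have hδA : ENNReal.ofReal δ = ediam A := ENNReal.ofReal_toReal hfin
  have hδ0 : 0 ≤ δ := ENNReal.toReal_nonneg
  have hδ1 : δ < 1 := by
    have : δ ≤ 1 / 2 := ENNReal.toReal_le_of_le_ofReal (by norm_num) hA
    linarith
  have hle : ∀ r ∈ Ioo δ 1, C⁻¹ * ν A ≤ ENNReal.ofReal r ^ d := by
    intro r hr
    have hr0 : 0 < r := hδ0.trans_lt hr.1
    have hsub : A ⊆ ball x r := by
      intro y hy
      rw [mem_ball, ← edist_lt_ofReal]
      refine (edist_le_ediam_of_mem hy hx).trans_lt ?_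
      rw [← hδA]
      exact (ENNReal.ofReal_lt_ofReal_iff hr0).2 hr.1
    rw [mul_comm, ← div_eq_mul_inv]
    exact ENNReal.div_le_of_le_mul' ((measure_mono hsub).trans (hball x r hr0 hr.2.le))
  have hcont : Tendsto (fun r : ℝ => ENNReal.ofReal r ^ d) (nhdsWithin δ (Ioi δ))
      (nhds (ediam A ^ d)) := by
    rw [← hδA]
    exact ((ENNReal.continuous_rpow_const.comp ENNReal.continuous_ofReal).tendsto δ).mono_left
      nhdsWithin_le_nhds
  rw [Measure.smul_apply, smul_eq_mul]
  exact ge_of_tendsto hcont (by filter_upwards [Ioo_mem_nhdsGT hδ1] with r hr using hle r hr)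

/-- A weak limit point of probability measures carried by a decreasing sequence of compact sets
is carried by their intersection, and inherits eventual upper bounds on open sets. -/
theorem exists_probabilityMeasure_iInter {X : Type*} [MetricSpace X] [MeasurableSpace X]
    [BorelSpace X] (μ : ℕ → Measure X) [∀ k, IsProbabilityMeasure (μ k)]
    (L : ℕ → Set X) (hL : Antitone L) (hLc : ∀ k, IsCompact (L k)) (hμL : ∀ k, μ k (L k)ᶜ = 0) :
    ∃ ν : Measure X, ν (⋂ k, L k) = 1 ∧
      ∀ G, IsOpen G → ∀ b, (∀ᶠ k in atTop, μ k G ≤ b) → ν G ≤ b := by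
  let P : ℕ → ProbabilityMeasure X := fun k => ⟨μ k, inferInstance⟩
  have htight : IsTightMeasureSet {((p : ProbabilityMeasure X) : Measure X) | p ∈ range P} := by
    rw [isTightMeasureSet_iff_exists_isCompact_measure_compl_le]
    refine fun ε _ => ⟨L 0, hLc 0, ?_⟩
    rintro _ ⟨_, ⟨k, rfl⟩, rfl⟩
    have : μ k (L 0)ᶜ = 0 :=
      measure_mono_null (compl_subset_compl.2 (hL (Nat.zero_le k))) (hμL k)
    exact this.le.trans zero_le
  have hcomp := isCompact_closure_of_isTightMeasureSet htight
  let F : Ultrafilter ℕ := Ultrafilter.of atTop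
  have hF : (F : Filter ℕ) ≤ atTop := Ultrafilter.of_le atTop
  obtain ⟨p, -, hp⟩ := hcomp.ultrafilter_le_nhds (F.map P) (by
    rw [le_principal_iff]
    exact mem_map.2 (Filter.univ_mem' fun k => subset_closure (mem_range_self k)))
  have hlim : Tendsto P F (nhds p) := hp
  refine ⟨p, ?_, fun G hG b hb => ?_⟩
  · have hall : ∀ k, (p : Measure X) (L k)ᶜ = 0 := by
      intro k
      refine le_antisymm ((ProbabilityMeasure.le_liminf_measure_open_of_tendsto hlim
        (hLc k).isClosed.isOpen_compl).trans ?_) zero_le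
      refine liminf_le_of_frequently_le' (Eventually.frequently ?_)
      filter_upwards [hF (eventually_ge_atTop k)] with l hl
      exact (measure_mono_null (compl_subset_compl.2 (hL hl)) (hμL l)).le
    rw [← prob_compl_eq_zero_iff (MeasurableSet.iInter fun k => (hLc k).measurableSet),
      compl_iInter]
    exact measure_iUnion_null hall
  · refine (ProbabilityMeasure.le_liminf_measure_open_of_tendsto hlim hG).trans ?_
    exact liminf_le_of_frequently_le' (Eventually.frequently (hF hb))

section Levels

variable {X : Type*} {N : ℕ} {m : Fin N → ℕ} {S : ∀ i, Fin (m i) → X → X} {K₀ : Set X}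

theorem levelSets_succ_subset (hK : ∀ i j, S i j '' K₀ ⊆ K₀) (ω : ℕ → Fin N) (k : ℕ) :
    levelSets m S K₀ ω (k + 1) ⊆ levelSets m S K₀ ω k := by
  induction k generalizing ω with
  | zero => exact iUnion_subset fun j => hK _ j
  | succ k ih => exact iUnion_mono fun j => image_mono (ih _)

theorem antitone_levelSets (hK : ∀ i j, S i j '' K₀ ⊆ K₀) (ω : ℕ → Fin N) :
    Antitone (levelSets m S K₀ ω) :=
  antitone_nat_of_succ_le (levelSets_succ_subset hK ω)

theorem isCompact_levelSets [TopologicalSpace X] (hS : ∀ i j, Continuous (S i j))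
    (hK : IsCompact K₀) (ω : ℕ → Fin N) (k : ℕ) : IsCompact (levelSets m S K₀ ω k) := by
  induction k generalizing ω with
  | zero => exact hK
  | succ k ih => exact isCompact_iUnion fun j => (ih _).image (hS _ j)

/-- The level-`k` approximation of the natural self-similar measure on the random attractor:
the image of the point `z` under a word `i₁ ⋯ i_k` gets the product of the weights
`p (ω l) (i l)`. -/
noncomputable def levelMeasure [MeasurableSpace X] (S : ∀ i, Fin (m i) → X → X)
    (p : ∀ i, Fin (m i) → ℝ) (z : X) : (ℕ → Fin N) → ℕ → Measure X
  | _, 0 => Measure.dirac z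
  | ω, k + 1 => ∑ j, ENNReal.ofReal (p (ω 0) j) •
      (levelMeasure S p z (fun l => ω (l + 1)) k).map (S (ω 0) j)

variable [MeasurableSpace X] {p : ∀ i, Fin (m i) → ℝ} {z : X}

theorem levelMeasure_succ_apply (hS : ∀ i j, Measurable (S i j)) (ω : ℕ → Fin N) (k : ℕ)
    {U : Set X} (hU : MeasurableSet U) :
    levelMeasure S p z ω (k + 1) U = ∑ j, ENNReal.ofReal (p (ω 0) j) *
      levelMeasure S p z (fun l => ω (l + 1)) k (S (ω 0) j ⁻¹' U) := by
  simp [levelMeasure, Measure.map_apply (hS _ _) hU]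

theorem isProbabilityMeasure_levelMeasure (hS : ∀ i j, Measurable (S i j))
    (hp : ∀ i j, 0 ≤ p i j) (hp1 : ∀ i, ∑ j, p i j = 1) (ω : ℕ → Fin N) (k : ℕ) :
    IsProbabilityMeasure (levelMeasure S p z ω k) := by
  induction k generalizing ω with
  | zero => exact Measure.dirac.isProbabilityMeasure
  | succ k ih =>
    constructor
    have := ih fun l => ω (l + 1)
    rw [levelMeasure_succ_apply hS ω k MeasurableSet.univ]
    simp [← ENNReal.ofReal_sum_of_nonneg fun j _ => hp (ω 0) j, hp1]

theorem levelMeasure_compl_levelSets (hS : ∀ i j, Measurable (S i j)) (hz : z ∈ K₀)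
    (hmeas : ∀ ω k, MeasurableSet (levelSets m S K₀ ω k)) (ω : ℕ → Fin N) (k : ℕ) :
    levelMeasure S p z ω k (levelSets m S K₀ ω k)ᶜ = 0 := by
  induction k generalizing ω with
  | zero =>
    have hK : MeasurableSet K₀ := hmeas ω 0
    change Measure.dirac z K₀ᶜ = 0
    rw [Measure.dirac_apply' _ hK.compl]
    simp [hz]
  | succ k ih =>
    rw [levelMeasure_succ_apply hS ω k (hmeas ω (k + 1)).compl]
    refine Finset.sum_eq_zero fun j _ => ?_
    rw [measure_mono_null _ (ih fun l => ω (l + 1)), mul_zero]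
    intro x hx hx'
    exact hx (mem_iUnion.2 ⟨j, mem_image_of_mem _ hx'⟩)

end Levels

section Similarities

variable {n N : ℕ} {m : Fin N → ℕ}
  {S : ∀ i, Fin (m i) → EuclideanSpace ℝ (Fin n) → EuclideanSpace ℝ (Fin n)}
  {ρ : ∀ i, Fin (m i) → ℝ} {O K₀ : Set (EuclideanSpace ℝ (Fin n))}
  {s : Fin N → ℝ} {smin : ℝ} {z : EuclideanSpace ℝ (Fin n)}

theorem weight_mul_le {r q t a : ℝ} {n : ℕ} (hr : 0 < r) (hq : 0 < q) (hq1 : q < 1)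
    (hta : a ≤ t) : q ^ t * ((r / q) ^ (a - n) * (q⁻¹) ^ (n : ℝ)) ≤ r ^ (a - n) := by
  have h1 : q ^ t * ((r / q) ^ (a - n) * (q⁻¹) ^ (n : ℝ)) = r ^ (a - n) * q ^ (t - a) := by
    rw [Real.div_rpow hr.le hq.le, Real.inv_rpow hq.le, Real.rpow_sub hq, Real.rpow_sub hq]
    have := (Real.rpow_pos_of_pos hq a).ne'
    have := (Real.rpow_pos_of_pos hq (n : ℝ)).ne'
    field_simp
  rw [h1]
  exact mul_le_of_le_one_right (Real.rpow_nonneg hr.le _)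
    (Real.rpow_le_one hq.le hq1.le (by linarith))

theorem hausdorffMeasure_le_image_of_dist_eq {X : Type*} [MetricSpace X] [MeasurableSpace X]
    [BorelSpace X] {f : X → X} {q d : ℝ} (hq : 0 < q) (hd : 0 ≤ d)
    (hf : ∀ x y, dist (f x) (f y) = q * dist x y) (A : Set X) :
    μH[d] A ≤ ENNReal.ofReal (q⁻¹ ^ d) * μH[d] (f '' A) := by
  have hanti : AntilipschitzWith (Real.toNNReal q⁻¹) f := by
    refine AntilipschitzWith.of_le_mul_dist fun x y => ?_
    rw [hf, Real.coe_toNNReal _ (by positivity), inv_mul_cancel_left₀ hq.ne']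
  rw [← ENNReal.ofReal_rpow_of_pos (by positivity)]
  exact hanti.le_hausdorffMeasure_image hd A

/-- The disjoint images of `O` under one iterated function system turn volume bounds at the
rescaled sets into a volume bound at the original set. -/
theorem sum_hausdorffMeasure_inter_thickening_le {ι : Type*} [Fintype ι]
    {f : ι → EuclideanSpace ℝ (Fin n) → EuclideanSpace ℝ (Fin n)} {q : ι → ℝ}
    (hq : ∀ j, 0 < q j) (hf : ∀ j x y, dist (f j x) (f j y) = q j * dist x y)
    (hO : IsOpen O) (hOsub : ∀ j, f j '' O ⊆ O)
    (hOdisj : Pairwise fun j j' => Disjoint (f j '' O) (f j' '' O))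
    (δ : ℝ) (U : Set (EuclideanSpace ℝ (Fin n))) :
    ∑ j, μH[(n : ℝ)] (f j '' (O ∩ thickening (δ / q j) (f j ⁻¹' U))) ≤
      μH[(n : ℝ)] (O ∩ thickening δ U) := by
  have hcont : ∀ j, Continuous (f j) := fun j =>
    (LipschitzWith.of_dist_le_mul (K := (q j).toNNReal) fun x y => by
      rw [hf, Real.coe_toNNReal _ (hq j).le]).continuous
  have hinj : ∀ j, Function.Injective (f j) := fun j x y hxy => by
    have := hf j x y
    rw [hxy, dist_self] at this
    exact dist_eq_zero.1 ((mul_eq_zero.1 this.symm).resolve_left (hq j).ne')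
  rw [← tsum_fintype (L := SummationFilter.unconditional _), ← measure_iUnion]
  · refine measure_mono (iUnion_subset fun j => ?_)
    rintro _ ⟨x, ⟨hxO, hx⟩, rfl⟩
    refine ⟨hOsub j (mem_image_of_mem _ hxO), ?_⟩
    obtain ⟨y, hy, hxy⟩ := mem_thickening_iff.1 hx
    refine mem_thickening_iff.2 ⟨f j y, hy, ?_⟩
    rw [hf]
    rwa [lt_div_iff₀' (hq j)] at hxy
  · exact fun j j' hjj => (hOdisj hjj).mono (image_mono inter_subset_left)
      (image_mono inter_subset_left)
  · exact fun j => (hO.inter isOpen_thickening).measurableSet.image_of_continuousOn_injOn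
      (hcont j).continuousOn (hinj j).injOn

theorem levelMeasure_le_hausdorffMeasure_thickening
    (hρ : ∀ i j, 0 < ρ i j ∧ ρ i j < 1)
    (hsim : ∀ i j x y, dist (S i j x) (S i j y) = ρ i j * dist x y)
    (hS : ∀ i j, Measurable (S i j))
    (hO : IsOpen O) (hOsub : ∀ i j, S i j '' O ⊆ O)
    (hOdisj : ∀ i, Pairwise fun j j' : Fin (m i) => Disjoint (S i j '' O) (S i j' '' O))
    (hs : ∀ i, ∑ j, ρ i j ^ s i = 1) (hsmin : ∀ i, smin ≤ s i)
    (hsupp : ∀ ω k, levelMeasure S (fun i j => ρ i j ^ s i) z ω k K₀ᶜ = 0)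
    {θ B R : ℝ} {c v : ℝ≥0∞} (hθ : ∀ i j, ρ i j ≤ θ) (hB : ∀ i j, (ρ i j)⁻¹ ≤ B) (hR : 0 ≤ R)
    (hv : ∀ x ∈ K₀, v ≤ μH[(n : ℝ)] (O ∩ ball x R))
    (hc : ∀ r : ℝ, 1 ≤ r → r ≤ B → 1 ≤ c * ENNReal.ofReal (r ^ (smin - n)) * v)
    (k : ℕ) (ω : ℕ → Fin N) (U : Set (EuclideanSpace ℝ (Fin n))) (hU : MeasurableSet U)
    (r : ℝ) (hr0 : 0 < r) (hrB : r ≤ B) (hrθ : θ ^ k ≤ r) :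
    levelMeasure S (fun i j => ρ i j ^ s i) z ω k U ≤
      c * ENNReal.ofReal (r ^ (smin - n)) * μH[(n : ℝ)] (O ∩ thickening (R * r) U) := by
  have hlarge : ∀ (k : ℕ) (ω : ℕ → Fin N) (U : Set (EuclideanSpace ℝ (Fin n))) (r : ℝ), 1 ≤ r →
      r ≤ B → levelMeasure S (fun i j => ρ i j ^ s i) z ω k U ≤
      c * ENNReal.ofReal (r ^ (smin - n)) * μH[(n : ℝ)] (O ∩ thickening (R * r) U) := by
    intro k ω U r hr1 hrB
    by_cases hUK : (U ∩ K₀).Nonempty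
    · obtain ⟨x, hxU, hxK⟩ := hUK
      have := isProbabilityMeasure_levelMeasure (z := z) hS
        (fun i j => Real.rpow_nonneg (hρ i j).1.le (s i)) hs ω k
      refine prob_le_one.trans ((hc r hr1 hrB).trans ?_)
      gcongr
      refine (hv x hxK).trans (measure_mono (inter_subset_inter_right _ ?_))
      exact (ball_subset_ball (le_mul_of_one_le_right hR hr1)).trans
        (ball_subset_thickening hxU _)
    · rw [measure_mono_null (fun x hx hxK => hUK ⟨x, hx, hxK⟩) (hsupp ω k)]
      exact zero_le
  induction k generalizing ω U r with
  | zero => exact hlarge 0 ω U r (by simpa using hrθ) hrB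
  | succ k ih =>
    rcases le_or_gt 1 r with hr1 | hr1
    · exact hlarge (k + 1) ω U r hr1 hrB
    rw [levelMeasure_succ_apply hS ω k hU]
    set i := ω 0
    have hθ0 : ∀ j : Fin (m i), 0 ≤ θ := fun j => (hρ i j).1.le.trans (hθ i j)
    calc
      _ ≤ ∑ j, c * ENNReal.ofReal (r ^ (smin - n)) *
          μH[(n : ℝ)] (S i j '' (O ∩ thickening (R * r / ρ i j) (S i j ⁻¹' U))) := by
        refine Finset.sum_le_sum fun j _ => ?_
        have hj := (hρ i j).1
        have h1 := ih (fun l => ω (l + 1)) (S i j ⁻¹' U) (hS i j hU) (r / ρ i j) (by positivity)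
          (by
            rw [div_eq_mul_inv]
            exact (mul_le_of_le_one_left (by positivity) hr1.le).trans (hB i j))
          (by
            rw [le_div_iff₀ hj]
            refine le_trans ?_ hrθ
            rw [pow_succ]
            exact mul_le_mul_of_nonneg_left (hθ i j) (pow_nonneg (hθ0 j) k))
        rw [← mul_div_assoc] at h1
        have h2 := hausdorffMeasure_le_image_of_dist_eq hj (Nat.cast_nonneg n) (hsim i j)
          (O ∩ thickening (R * r / ρ i j) (S i j ⁻¹' U))
        set A := O ∩ thickening (R * r / ρ i j) (S i j ⁻¹' U)
        calc
          _ ≤ ENNReal.ofReal (ρ i j ^ s i) * (c * ENNReal.ofReal ((r / ρ i j) ^ (smin - n)) *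
              (ENNReal.ofReal ((ρ i j)⁻¹ ^ (n : ℝ)) * μH[(n : ℝ)] (S i j '' A))) := by
            gcongr
            exact h1.trans (by gcongr)
          _ = c * ENNReal.ofReal (ρ i j ^ s i *
              ((r / ρ i j) ^ (smin - n) * (ρ i j)⁻¹ ^ (n : ℝ))) * μH[(n : ℝ)] (S i j '' A) := by
            rw [ENNReal.ofReal_mul (by positivity), ENNReal.ofReal_mul (by positivity)]
            ring
          _ ≤ _ := by
            gcongr
            exact weight_mul_le hr0 hj (hρ i j).2 (hsmin i)
      _ ≤ _ := by
        rw [← Finset.mul_sum]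
        gcongr
        exact sum_hausdorffMeasure_inter_thickening_le (fun j => (hρ i j).1) (hsim i) hO
          (hOsub i) (hOdisj i) (R * r) U

theorem nonneg_of_sum_rpow_eq_one {ι : Type*} [Fintype ι] [Nonempty ι] {q : ι → ℝ} {t : ℝ}
    (hq : ∀ j, 0 < q j ∧ q j < 1) (ht : ∑ j, q j ^ t = 1) : 0 ≤ t := by
  by_contra! h
  obtain ⟨j⟩ := ‹Nonempty ι›
  have h1 : 1 < q j ^ t := Real.one_lt_rpow_of_pos_of_lt_one_of_neg (hq j).1 (hq j).2 h
  have h2 : q j ^ t ≤ ∑ j, q j ^ t :=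
    Finset.single_le_sum (f := fun j => q j ^ t) (fun j _ => Real.rpow_nonneg (hq j).1.le t)
      (Finset.mem_univ j)
  linarith

theorem hausdorffMeasure_ball {r : ℝ} (hr : 0 < r) (x : EuclideanSpace ℝ (Fin n)) :
    μH[(n : ℝ)] (ball x r) = ENNReal.ofReal (r ^ n) *
      μH[(n : ℝ)] (ball (0 : EuclideanSpace ℝ (Fin n)) 1) := by
  have : (μH[(n : ℝ)] : Measure (EuclideanSpace ℝ (Fin n))).IsAddHaarMeasure := by
    simpa using isAddHaarMeasure_hausdorffMeasure (E := EuclideanSpace ℝ (Fin n))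
  simpa using Measure.addHaar_ball_of_pos (μH[(n : ℝ)]) x hr

/-- A lower bound for the Hausdorff measure of the random attractor, uniform in `ω`. -/
theorem exists_pos_le_hausdorffMeasure_attractorOf (hN : 0 < N) (hm : ∀ i, 0 < m i)
    (hρ : ∀ i j, 0 < ρ i j ∧ ρ i j < 1)
    (hsim : ∀ i j x y, dist (S i j x) (S i j y) = ρ i j * dist x y)
    (hOne : O.Nonempty) (hO : IsOpen O) (hOsub : ∀ i j, S i j '' O ⊆ O)
    (hOdisj : ∀ i, Pairwise fun j j' : Fin (m i) => Disjoint (S i j '' O) (S i j' '' O))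
    (hK₀c : IsCompact K₀) (hK₀ne : K₀.Nonempty) (hK₀inv : ∀ i j, S i j '' K₀ ⊆ K₀)
    (hs : ∀ i, ∑ j, ρ i j ^ s i = 1) (hsmin : ∀ i, smin ≤ s i) :
    ∃ c : ℝ≥0∞, 0 < c ∧ ∀ ω : ℕ → Fin N, c ≤ μH[smin] (attractorOf m S K₀ ω) := by
  have hcont : ∀ i j, Continuous (S i j) := fun i j =>
    (LipschitzWith.of_dist_le_mul (K := (ρ i j).toNNReal) fun x y => by
      rw [hsim, Real.coe_toNNReal _ (hρ i j).1.le]).continuous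
  have hS : ∀ i j, Measurable (S i j) := fun i j => (hcont i j).measurable
  have : Nonempty (Σ i, Fin (m i)) := ⟨⟨⟨0, hN⟩, ⟨0, hm _⟩⟩⟩
  obtain ⟨a, ha⟩ := Finite.exists_max fun a : Σ i, Fin (m i) => ρ a.1 a.2
  obtain ⟨b, hb⟩ := Finite.exists_min fun a : Σ i, Fin (m i) => ρ a.1 a.2
  set θ := ρ a.1 a.2
  set B := (ρ b.1 b.2)⁻¹
  have hθ : ∀ i j, ρ i j ≤ θ := fun i j => ha ⟨i, j⟩
  have hB : ∀ i j, (ρ i j)⁻¹ ≤ B := fun i j => inv_anti₀ (hρ _ _).1 (hb ⟨i, j⟩)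
  have hB1 : 1 ≤ B := (one_le_inv₀ (hρ _ _).1).2 (hρ _ _).2.le
  obtain ⟨z, hz⟩ := hK₀ne
  obtain ⟨x₀, hx₀⟩ := hOne
  obtain ⟨ε, hε, hεO⟩ := Metric.isOpen_iff.1 hO x₀ hx₀
  obtain ⟨D, hD0, hD⟩ := hK₀c.isBounded.subset_ball_lt 0 x₀
  set R := D + ε
  have hR : 0 ≤ R := by positivity
  set V := μH[(n : ℝ)] (ball (0 : EuclideanSpace ℝ (Fin n)) 1)
  have : (μH[(n : ℝ)] : Measure (EuclideanSpace ℝ (Fin n))).IsAddHaarMeasure := by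
    simpa using isAddHaarMeasure_hausdorffMeasure (E := EuclideanSpace ℝ (Fin n))
  have hVtop : V ≠ ⊤ := measure_ball_lt_top.ne
  set v := μH[(n : ℝ)] (ball x₀ ε)
  have hv0 : v ≠ 0 := (measure_ball_pos _ _ hε).ne'
  have hvtop : v ≠ ⊤ := measure_ball_lt_top.ne
  have hv : ∀ x ∈ K₀, v ≤ μH[(n : ℝ)] (O ∩ ball x R) := fun x hx =>
    measure_mono (subset_inter hεO (ball_subset_ball' (by
      have := hD hx
      rw [mem_ball, dist_comm] at this
      linarith)))
  set κ := B ^ (-|smin - n|)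
  have hκ : 0 < κ := Real.rpow_pos_of_pos (by linarith) _
  set c := (ENNReal.ofReal κ * v)⁻¹
  have hκv0 : ENNReal.ofReal κ * v ≠ 0 := mul_ne_zero (ENNReal.ofReal_pos.2 hκ).ne' hv0
  have hκvtop : ENNReal.ofReal κ * v ≠ ⊤ := ENNReal.mul_ne_top ENNReal.ofReal_ne_top hvtop
  have hctop : c ≠ ⊤ := ENNReal.inv_ne_top.2 hκv0
  have hc : ∀ r : ℝ, 1 ≤ r → r ≤ B → 1 ≤ c * ENNReal.ofReal (r ^ (smin - n)) * v := by
    intro r hr1 hrB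
    have hκr : κ ≤ r ^ (smin - n) :=
      (Real.rpow_le_rpow_of_nonpos (by linarith) hrB (by simp)).trans
        (Real.rpow_le_rpow_of_exponent_le hr1 (neg_abs_le _))
    rw [← ENNReal.inv_mul_cancel hκv0 hκvtop, mul_assoc]
    gcongr
  refine ⟨(c * ENNReal.ofReal ((R + 1) ^ n) * V)⁻¹, ENNReal.inv_pos.2
    (ENNReal.mul_ne_top (ENNReal.mul_ne_top hctop ENNReal.ofReal_ne_top) hVtop), fun ω => ?_⟩
  have hLc := fun ω k => isCompact_levelSets (m := m) hcont hK₀c ω k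
  have hL := fun ω => antitone_levelSets hK₀inv ω
  have hμL := fun ω k => levelMeasure_compl_levelSets (p := fun i j => ρ i j ^ s i) hS hz
    (fun ω k => (hLc ω k).measurableSet) ω k
  have := isProbabilityMeasure_levelMeasure (z := z) hS
    (fun i j => Real.rpow_nonneg (hρ i j).1.le (s i)) hs ω
  obtain ⟨ν, hν1, hν⟩ := exists_probabilityMeasure_iInter
    (levelMeasure S (fun i j => ρ i j ^ s i) z ω) _ (hL ω) (hLc ω) (hμL ω)
  have hball : ∀ x : EuclideanSpace ℝ (Fin n), ∀ r : ℝ, 0 < r → r ≤ 1 →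
      ν (ball x r) ≤ c * ENNReal.ofReal ((R + 1) ^ n) * V * ENNReal.ofReal r ^ smin := by
    intro x r hr0 hr1
    refine hν _ isOpen_ball _ ?_
    filter_upwards [(tendsto_pow_atTop_nhds_zero_of_lt_one (hρ a.1 a.2).1.le
      (hρ a.1 a.2).2).eventually_le_const hr0] with k hk
    refine (levelMeasure_le_hausdorffMeasure_thickening hρ hsim hS hO hOsub hOdisj hs hsmin
      (fun ω k => measure_mono_null (compl_subset_compl.2 (hL ω (Nat.zero_le k))) (hμL ω k))
      hθ hB hR hv hc k ω _ measurableSet_ball r hr0 (hr1.trans hB1) hk).trans ?_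
    have hsub : O ∩ thickening (R * r) (ball x r) ⊆ ball x ((R + 1) * r) := by
      refine inter_subset_right.trans (fun y hy => ?_)
      obtain ⟨w, hw, hyw⟩ := mem_thickening_iff.1 hy
      rw [mem_ball] at hw ⊢
      linarith [dist_triangle y w x]
    calc
      _ ≤ c * ENNReal.ofReal (r ^ (smin - n)) * (ENNReal.ofReal (((R + 1) * r) ^ n) * V) := by
        gcongr
        exact (measure_mono hsub).trans_eq (hausdorffMeasure_ball (by positivity) x)
      _ = c * ENNReal.ofReal ((R + 1) ^ n) * V * ENNReal.ofReal (r ^ (smin - n) * r ^ n) := by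
        rw [mul_pow, ENNReal.ofReal_mul (by positivity), ENNReal.ofReal_mul (by positivity)]
        ring
      _ = _ := by
        rw [← Real.rpow_natCast r n, ← Real.rpow_add hr0, sub_add_cancel,
          ENNReal.ofReal_rpow_of_pos hr0]
  have hle := le_hausdorffMeasure_of_measure_ball_le ν _ smin hball
    (attractorOf m S K₀ ω)
  rw [Measure.smul_apply, attractorOf, hν1, smul_eq_mul, mul_one] at hle
  exact hle

end Similarities

end HausdorffLowerBound

/-- For a RIFS of contracting similarities on `ℝⁿ` satisfying the uniform open set
condition, `inf_ω 𝓗^{s_min}(F_ω) > 0`; in particular `dim_H F_ω ≥ s_min` for all `ω`. -/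
theorem hausdorffMeasure_smin_pos (n : ℕ) {N : ℕ} (hN : 0 < N)
    (m : Fin N → ℕ) (hm : ∀ i, 0 < m i)
    (S : ∀ i, Fin (m i) → EuclideanSpace ℝ (Fin n) → EuclideanSpace ℝ (Fin n))
    (ρ : ∀ i, Fin (m i) → ℝ) (hρ : ∀ i j, 0 < ρ i j ∧ ρ i j < 1)
    (hsim : ∀ i j x y, dist (S i j x) (S i j y) = ρ i j * dist x y)
    (O : Set (EuclideanSpace ℝ (Fin n))) (hOne : O.Nonempty) (hOopen : IsOpen O)
    (hOsub : ∀ i j, S i j '' O ⊆ O)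
    (hOdisj : ∀ i, Pairwise fun j j' : Fin (m i) => Disjoint (S i j '' O) (S i j' '' O))
    (K₀ : Set (EuclideanSpace ℝ (Fin n))) (hK₀c : IsCompact K₀) (hK₀ne : K₀.Nonempty)
    (hK₀inv : ∀ i j, S i j '' K₀ ⊆ K₀)
    (s : Fin N → ℝ) (hs : ∀ i, ∑ j, ρ i j ^ s i = 1)
    (smin : ℝ) (hsmin : IsLeast (Set.range s) smin) :
    0 < (⨅ ω : ℕ → Fin N, μH[smin] (attractorOf m S K₀ ω)) ∧
      ∀ ω : ℕ → Fin N, ENNReal.ofReal smin ≤ dimH (attractorOf m S K₀ ω) := by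
  have : Nonempty (Fin N) := ⟨⟨0, hN⟩⟩
  have hsmin0 : 0 ≤ smin := by
    obtain ⟨i, rfl⟩ := hsmin.1
    have : Nonempty (Fin (m i)) := ⟨⟨0, hm i⟩⟩
    exact nonneg_of_sum_rpow_eq_one (hρ i) (hs i)
  obtain ⟨c, hc0, hc⟩ := exists_pos_le_hausdorffMeasure_attractorOf hN hm hρ hsim hOne hOopen
    hOsub hOdisj hK₀c hK₀ne hK₀inv hs (fun i => hsmin.2 (mem_range_self i))
  refine ⟨hc0.trans_le (le_iInf hc), fun ω => ?_⟩
  refine le_dimH_of_hausdorffMeasure_ne_zero (d := smin.toNNReal) ?_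
  rw [Real.coe_toNNReal _ hsmin0]
  exact (hc0.trans_le (hc ω)).ne'
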